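/- Let (X,d) be a compact metric space and {𝒜_r}_{r∈[0,∞)} a filtered family of admissible curves on X. Suppose there is a metric ρ on X such that (X,ρ) is totally bounded and such that for every r > 0, every x,y ∈ X, every γ ∈ 𝒜_r(x), and every ε > 0, there exists μ ∈ 𝒜_r(y) with d̄(γ,μ) ≤ ρ(x,y) + ε. Then δ_r(x,y) ≤ ρ(x,y) and d_r(x,y) ≤ 2·ρ(x,y) for all r > 0 and all x,y ∈ X, and consequently the entropy h({d_r}_{r∈[0,∞)}, X) of the associated family of distances is zero. (This is the abstract content of the theorem that a controllable smooth distribution on a compact Finsler manifold has zero Finsler entropy, where ρ is the distance of minimal length of admissible curves joining two points.) -/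

import Mathlib

open Filter Topology unitInterval
open scoped ENNReal NNReal

variable {X : Type*}

/-- `ρ` is a metric on `X`. -/
def IsMetric (ρ : X → X → ℝ) : Prop :=
  (∀ x y, ρ x y = 0 ↔ x = y) ∧ (∀ x y, ρ x y = ρ y x) ∧ ∀ x y z, ρ x z ≤ ρ x y + ρ y z

/-- the curve `t ↦ γ(c·t)` obtained from `γ` by rescaling the parameter by `c ∈ [0,1]`. -/
def rescaleCurve [TopologicalSpace X] (c : unitInterval) (γ : C(unitInterval, X)) :
    C(unitInterval, X) :=
  γ.comp ⟨fun t => c * t,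
    Continuous.subtype_mk (continuous_const.mul continuous_subtype_val) _⟩

/-- A filtered family of admissible curves on `X`: `𝒜 0` is the set of constant curves,
every `𝒜 r` contains the constant curves, the family is monotone in `r`, and for
`0 < s < r` every curve of `𝒜 r` can be rescaled into a curve of `𝒜 s`. -/
structure IsAdmissibleFiltration [TopologicalSpace X]
    (𝒜 : ℝ≥0 → Set C(unitInterval, X)) : Prop where
  zero_eq : 𝒜 0 = {γ | ∃ x : X, γ = ContinuousMap.const unitInterval x}
  const_mem : ∀ (r : ℝ≥0) (x : X), ContinuousMap.const unitInterval x ∈ 𝒜 r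
  mono : ∀ ⦃s r : ℝ≥0⦄, s ≤ r → 𝒜 s ⊆ 𝒜 r
  rescale : ∀ ⦃s r : ℝ≥0⦄, 0 < s → s < r → ∀ γ ∈ 𝒜 r,
    ∃ c : unitInterval, rescaleCurve c γ ∈ 𝒜 s

/-- `𝒜_r(x)`: the curves of `𝒜 r` starting at `x`. -/
def curveSet [TopologicalSpace X] (𝒜 : ℝ≥0 → Set C(unitInterval, X)) (r : ℝ≥0) (x : X) :
    Set C(unitInterval, X) :=
  {γ | γ ∈ 𝒜 r ∧ γ 0 = x}

/-- `δ_r(x,y) = sup_{γ ∈ 𝒜_r(x)} inf_{μ ∈ 𝒜_r(y)} d̄(γ,μ)`, where `d̄` is the uniform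
distance on `C([0,1],X)` (which is the distance of the metric space `C([0,1],X)`). -/
noncomputable def deltaR [MetricSpace X] (𝒜 : ℝ≥0 → Set C(unitInterval, X)) (r : ℝ≥0)
    (x y : X) : ℝ :=
  ⨆ γ : curveSet 𝒜 r x, ⨅ μ : curveSet 𝒜 r y, dist (γ : C(unitInterval, X)) μ

/-- `d_r(x,y) = δ_r(x,y) + δ_r(y,x)`. -/
noncomputable def dR [MetricSpace X] (𝒜 : ℝ≥0 → Set C(unitInterval, X)) (r : ℝ≥0)
    (x y : X) : ℝ :=
  deltaR 𝒜 r x y + deltaR 𝒜 r y x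

/-- `M(ρ,ε)`: the minimal number of closed `ρ`-balls of radius `ε` needed to cover `X`. -/
noncomputable def coverNum (ρ : X → X → ℝ) (ε : ℝ) : ℕ∞ :=
  sInf {n : ℕ∞ | ∃ s : Finset X, (s.card : ℕ∞) = n ∧ ∀ x : X, ∃ c ∈ s, ρ c x ≤ ε}

/-- extended logarithm on `ℕ∞`, with values in `[0,∞]`. -/
noncomputable def elog (n : ℕ∞) : ℝ≥0∞ :=
  if n = ⊤ then ⊤ else ENNReal.ofReal (Real.log (n.toNat : ℝ))

/-- entropy of a family of distances: `sup_{ε>0} limsup_{r→∞} (1/r) log M(d_r,ε)`. -/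
noncomputable def entropy (d : ℝ≥0 → X → X → ℝ) : ℝ≥0∞ :=
  ⨆ (ε : ℝ) (_ : 0 < ε),
    Filter.limsup (fun r : ℝ≥0 => elog (coverNum (d r) ε) / (r : ℝ≥0∞)) Filter.atTop

/-! A curve issued from `x` can be traded for one issued from `y` at a cost arbitrarily close to
`ρ x y`, whatever `r > 0` is, so `d_r ≤ 2ρ`. An `ε / 2`-net for `ρ` is thus an `ε`-net for every
`d_r` with `r > 0`: their covering numbers are bounded independently of `r`, and have growth rate
zero. -/

section Entropy

theorem coverNum_le_card {d : X → X → ℝ} {ε : ℝ} {s : Finset X}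
    (hs : ∀ x, ∃ c ∈ s, d c x ≤ ε) : coverNum d ε ≤ s.card :=
  sInf_le ⟨s, rfl, hs⟩

theorem elog_natCast (n : ℕ) : elog n = ENNReal.ofReal (Real.log n) := by
  simp [elog]

theorem elog_natCast_ne_top (n : ℕ) : elog n ≠ ⊤ := by
  rw [elog_natCast]
  exact ENNReal.ofReal_ne_top

theorem elog_mono : Monotone elog := by
  intro m n hmn
  induction n with
  | top => simp [elog]
  | coe n =>
    lift m to ℕ using ne_top_of_le_ne_top (ENat.natCast_ne_top n) hmn
    rw [elog_natCast, elog_natCast]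
    refine ENNReal.ofReal_le_ofReal ?_
    -- `Real.log 0 = 0`, so `m = 0` is not covered by the monotonicity of `Real.log`.
    obtain rfl | hm := m.eq_zero_or_pos
    · simpa using Real.log_natCast_nonneg n
    · exact Real.log_le_log (mod_cast hm) (mod_cast hmn)

theorem tendsto_div_zero_of_eventually_le_of_tendsto_top {α : Type*} {l : Filter α}
    {f g : α → ℝ≥0∞} {C : ℝ≥0∞} (hC : C ≠ ⊤) (hf : ∀ᶠ a in l, f a ≤ C)
    (hg : Tendsto g l (𝓝 ⊤)) : Tendsto (fun a ↦ f a / g a) l (𝓝 0) := by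
  have hconst : Tendsto (fun a ↦ C / g a) l (𝓝 0) := by
    simpa only [ENNReal.div_top] using ENNReal.Tendsto.const_div hg (Or.inr hC)
  refine tendsto_of_tendsto_of_tendsto_of_le_of_le' tendsto_const_nhds hconst
    (Eventually.of_forall fun _ ↦ zero_le) ?_
  exact hf.mono fun a ha ↦ ENNReal.div_le_div_right ha (g a)

theorem entropy_eq_zero_of_eventually_coverNum_le {d : ℝ≥0 → X → X → ℝ}
    (h : ∀ ε : ℝ, 0 < ε → ∃ N : ℕ, ∀ᶠ r in atTop, coverNum (d r) ε ≤ N) : entropy d = 0 := by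
  simp only [entropy, ENNReal.iSup_eq_zero]
  intro ε hε
  obtain ⟨N, hN⟩ := h ε hε
  have helog : ∀ᶠ r in atTop, elog (coverNum (d r) ε) ≤ elog N :=
    hN.mono fun _ hr ↦ elog_mono hr
  exact (tendsto_div_zero_of_eventually_le_of_tendsto_top (elog_natCast_ne_top N) helog
    (ENNReal.tendsto_coe_nhds_top.2 tendsto_id)).limsup_eq

theorem entropy_eq_zero_of_eventually_le_mul {d : ℝ≥0 → X → X → ℝ} {ρ : X → X → ℝ} {K : ℝ}
    (hK : 0 < K) (htb : ∀ ε : ℝ, 0 < ε → ∃ s : Finset X, ∀ x : X, ∃ c ∈ s, ρ c x ≤ ε)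
    (hd : ∀ᶠ r in atTop, ∀ x y, d r x y ≤ K * ρ x y) : entropy d = 0 := by
  refine entropy_eq_zero_of_eventually_coverNum_le fun ε hε ↦ ?_
  obtain ⟨s, hs⟩ := htb (ε / K) (div_pos hε hK)
  refine ⟨s.card, hd.mono fun r hr ↦ coverNum_le_card fun x ↦ ?_⟩
  obtain ⟨c, hcs, hc⟩ := hs x
  exact ⟨c, hcs, (hr c x).trans ((le_div_iff₀' hK).1 hc)⟩

end Entropy

section Curves

theorem IsAdmissibleFiltration.curveSet_nonempty [TopologicalSpace X]
    {𝒜 : ℝ≥0 → Set C(unitInterval, X)} (h𝒜 : IsAdmissibleFiltration 𝒜) (r : ℝ≥0) (x : X) :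
    (curveSet 𝒜 r x).Nonempty :=
  ⟨ContinuousMap.const unitInterval x, h𝒜.const_mem r x, rfl⟩

variable [MetricSpace X] {𝒜 : ℝ≥0 → Set C(unitInterval, X)} {r : ℝ≥0} {x y : X}

theorem deltaR_le_of_forall_exists_dist_le {a : ℝ} (hne : (curveSet 𝒜 r x).Nonempty)
    (h : ∀ γ ∈ curveSet 𝒜 r x, ∀ ε : ℝ, 0 < ε → ∃ μ ∈ curveSet 𝒜 r y, dist γ μ ≤ a + ε) :
    deltaR 𝒜 r x y ≤ a := by
  have : Nonempty (curveSet 𝒜 r x) := hne.to_subtype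
  refine ciSup_le fun γ ↦ le_of_forall_pos_le_add fun ε hε ↦ ?_
  obtain ⟨μ, hμ, hγμ⟩ := h γ γ.2 ε hε
  have hbdd : BddBelow (Set.range fun ν : curveSet 𝒜 r y ↦ dist (γ : C(unitInterval, X)) ν) :=
    ⟨0, Set.forall_mem_range.2 fun _ ↦ dist_nonneg⟩
  exact (ciInf_le hbdd ⟨μ, hμ⟩).trans hγμ

end Curves

theorem entropy_eq_zero_of_controllable_general [MetricSpace X]
    (𝒜 : ℝ≥0 → Set C(unitInterval, X))
    (hne : ∀ r : ℝ≥0, 0 < r → ∀ x : X, (curveSet 𝒜 r x).Nonempty)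
    (ρ : X → X → ℝ) (hsymm : ∀ x y, ρ x y = ρ y x)
    (htb : ∀ ε : ℝ, 0 < ε → ∃ s : Finset X, ∀ x : X, ∃ c ∈ s, ρ c x ≤ ε)
    (happrox : ∀ r : ℝ≥0, 0 < r → ∀ x y : X, ∀ γ ∈ curveSet 𝒜 r x, ∀ ε : ℝ, 0 < ε →
      ∃ μ ∈ curveSet 𝒜 r y, dist γ μ ≤ ρ x y + ε) :
    (∀ r : ℝ≥0, 0 < r → ∀ x y : X, deltaR 𝒜 r x y ≤ ρ x y) ∧
    (∀ r : ℝ≥0, 0 < r → ∀ x y : X, dR 𝒜 r x y ≤ 2 * ρ x y) ∧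
    entropy (fun r => dR 𝒜 r) = 0 := by
  have hδ (r : ℝ≥0) (hr : 0 < r) (x y : X) : deltaR 𝒜 r x y ≤ ρ x y :=
    deltaR_le_of_forall_exists_dist_le (hne r hr x) (happrox r hr x y)
  have hd (r : ℝ≥0) (hr : 0 < r) (x y : X) : dR 𝒜 r x y ≤ 2 * ρ x y :=
    calc
      dR 𝒜 r x y ≤ ρ x y + ρ y x := add_le_add (hδ r hr x y) (hδ r hr y x)
      _ = 2 * ρ x y := by rw [hsymm y x, two_mul]
  exact ⟨hδ, hd, entropy_eq_zero_of_eventually_le_mul two_pos htb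
    ((eventually_gt_atTop 0).mono hd)⟩

/-- If there is a totally bounded metric `ρ` on `X` such that any curve of `𝒜_r(x)` can be
`ε`-approximated by a curve of `𝒜_r(y)` up to `ρ(x,y)`, then `δ_r ≤ ρ`, `d_r ≤ 2ρ`, and the
entropy of the family `{d_r}` is zero.  (Abstract form of: a controllable distribution on a
compact Finsler manifold has zero Finsler entropy.) -/
theorem entropy_eq_zero_of_controllable [MetricSpace X] [CompactSpace X]
    (𝒜 : ℝ≥0 → Set C(unitInterval, X)) (h𝒜 : IsAdmissibleFiltration 𝒜)
    (ρ : X → X → ℝ) (hρ : IsMetric ρ)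
    (htb : ∀ ε : ℝ, 0 < ε → ∃ s : Finset X, ∀ x : X, ∃ c ∈ s, ρ c x ≤ ε)
    (happrox : ∀ r : ℝ≥0, 0 < r → ∀ x y : X, ∀ γ ∈ curveSet 𝒜 r x, ∀ ε : ℝ, 0 < ε →
      ∃ μ ∈ curveSet 𝒜 r y, dist γ μ ≤ ρ x y + ε) :
    (∀ r : ℝ≥0, 0 < r → ∀ x y : X, deltaR 𝒜 r x y ≤ ρ x y) ∧
    (∀ r : ℝ≥0, 0 < r → ∀ x y : X, dR 𝒜 r x y ≤ 2 * ρ x y) ∧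
    entropy (fun r => dR 𝒜 r) = 0 :=
  entropy_eq_zero_of_controllable_general 𝒜 (fun r _ x ↦ h𝒜.curveSet_nonempty r x) ρ hρ.2.1 htb
    happrox
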